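/- Let $A = \mathbb{C}[x_0,\ldots,x_4]/I$ be an artinian complete intersection algebra with $I$ generated by $5$ quadrics. Let $Q \in A_2$ be nonzero and suppose $\mathcal{Z}(Q) = \{z \in A_1 : zQ = 0\}$ has dimension at least $3$. Then there exists a nonzero linear form $p \in U$ with $p^2 \in I^{-1}_2$; consequently $\dim \mathcal{Z}(Q) \leq 2$ for every nonzero $Q \in A_2$. -/

import Mathlib

open MvPolynomial

noncomputable section

/-- The linear form with coefficient vector `p`. -/
def linform {n : ℕ} (p : Fin n → ℂ) : MvPolynomial (Fin n) ℂ :=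
  ∑ i, MvPolynomial.C (p i) * MvPolynomial.X i

/-- The apolarity pairing `⟨f, g⟩ = ∑_α f_α g_α α!` between polynomial spaces
(`f` viewed in `S^d U^*`, `g` in `S^d U`). -/
def apolar {n : ℕ} (f g : MvPolynomial (Fin n) ℂ) : ℂ :=
  ∑ α ∈ f.support, f.coeff α * g.coeff α * ∏ i, ((α i).factorial : ℂ)

/-- The degree-`k` graded piece of `ℂ[x₀,…,x_{n-1}]/I`. -/
def gradedPiece {n : ℕ} (I : Ideal (MvPolynomial (Fin n) ℂ)) (k : ℕ) :
    Submodule ℂ (MvPolynomial (Fin n) ℂ ⧸ I) :=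
  Submodule.map (Ideal.Quotient.mkₐ ℂ I).toLinearMap
    (MvPolynomial.homogeneousSubmodule (Fin n) ℂ k)

/-!
Write `A` for the quotient by the quadrics and `n` for the number of variables. Starting from the
regular sequence of the variables, prime avoidance allows the variables to be exchanged one at a
time for quadrics in the span of the generators. Each exchange raises the socle degree by one, so
the socle of `A` lives in degrees at least `n`. A nonzero `Q` of degree at most `n - 3` therefore
satisfies `Q A₃ ≠ 0`, and some functional `φ` is nonzero on `Q A₃`.

If the linear forms killing `Q` have codimension at most two in `A₁`, then `g ↦ φ (Q g)` is a
nonzero binary cubic in the two remaining linear forms. Over an algebraically closed field some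
derivative of a nonzero binary cubic is a nonzero square `p²`. As a functional on quadrics, `p²` is
evaluation at `p` up to a scalar, and it kills the ideal. So `p` is a nontrivial common zero of the
generators, which contradicts the complete intersection hypothesis.
-/

open RingTheory.Sequence Module

section RegularSequences

variable {R : Type*} [CommRing R]

lemma ofList_eq_of_perm {L L' : List R} (h : L.Perm L') : Ideal.ofList L = Ideal.ofList L' := by
  simp only [Ideal.ofList, h.mem_iff]

lemma mem_sup_span_singleton_iff {K : Ideal R} {a u : R} :
    u ∈ K ⊔ Ideal.span {a} ↔ ∃ w, u - a * w ∈ K := by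
  simp only [Submodule.mem_sup, Ideal.mem_span_singleton']
  constructor
  · rintro ⟨v, hv, _, ⟨w, rfl⟩, rfl⟩
    exact ⟨w, by simpa [mul_comm] using hv⟩
  · rintro ⟨w, hw⟩
    exact ⟨_, hw, _, ⟨w, rfl⟩, by ring⟩

lemma isWeaklyRegular_concat_iff (L : List R) (a : R) :
    IsWeaklyRegular R (L ++ [a]) ↔
      IsWeaklyRegular R L ∧ IsSMulRegular (R ⧸ Ideal.ofList L) a := by
  have htop : (Ideal.ofList L • ⊤ : Submodule R R) = Ideal.ofList L := Ideal.mul_top _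
  rw [isWeaklyRegular_append_iff, isWeaklyRegular_singleton_iff,
    (Submodule.quotEquivOfEq _ _ htop).isSMulRegular_congr]

lemma exists_isSMulRegular_of_mem_radical_span {k M : Type*} [Field k] [Infinite k] [Algebra k R]
    [IsNoetherianRing R] [AddCommGroup M] [Module R M] [Module.Finite R M]
    (V : Submodule k R) {b : R} (hb : b ∈ (Ideal.span (V : Set R)).radical)
    (hbM : IsSMulRegular M b) : ∃ v ∈ V, IsSMulRegular M v := by
  by_contra! hV
  have hcover : ∀ v ∈ V, ∃ P ∈ associatedPrimes R M, v ∈ P := by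
    intro v hv
    have : v ∈ {r : R | IsSMulRegular M r}ᶜ := hV v hv
    rw [← biUnion_associatedPrimes_eq_compl_regular R M] at this
    simpa using this
  have : Finite (associatedPrimes R M) := associatedPrimes.finite R M
  obtain ⟨P, hP⟩ := Subspace.exists_eq_top_of_iUnion_eq_univ
    (p := fun P : associatedPrimes R M ↦ (P.1.restrictScalars k).comap V.subtype) <| by
      refine Set.eq_univ_of_forall fun v ↦ Set.mem_iUnion.mpr ?_
      obtain ⟨P, hP, hvP⟩ := hcover v v.2
      exact ⟨⟨P, hP⟩, hvP⟩
  have hVP : Ideal.span (V : Set R) ≤ P.1 := Ideal.span_le.mpr fun v hv ↦ by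
    have : (⟨v, hv⟩ : V) ∈ (P.1.restrictScalars k).comap V.subtype := hP ▸ Submodule.mem_top
    exact this
  have hbP : b ∈ P.1 := P.2.isPrime.radical_le_iff.mpr hVP hb
  have : b ∈ {r : R | IsSMulRegular M r}ᶜ := by
    rw [← biUnion_associatedPrimes_eq_compl_regular R M]
    exact Set.mem_biUnion P.2 hbP
  exact this hbM

lemma length_le_finrank_span_of_isWeaklyRegular {k : Type*} [Field k] [Algebra k R] {L : List R}
    (hL : IsWeaklyRegular R L) (h1 : 1 ∉ Ideal.ofList L) :
    L.length ≤ finrank k (Submodule.span k {a | a ∈ L}) := by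
  induction L using List.reverseRecOn with
  | nil => simp
  | append_singleton L v ih =>
    obtain ⟨hL, hv⟩ := (isWeaklyRegular_concat_iff L v).mp hL
    rw [isSMulRegular_quotient_iff_mem_of_smul_mem] at hv
    have h1L : 1 ∉ Ideal.ofList L := fun h ↦ h1 <| by
      rw [Ideal.ofList_append]
      exact Ideal.mem_sup_left h
    have hvL : v ∉ Submodule.span k {a | a ∈ L} := by
      have hle : Submodule.span k {a | a ∈ L} ≤ (Ideal.ofList L).restrictScalars k :=
        Submodule.span_le.mpr Ideal.subset_span
      exact fun h ↦ h1L (hv 1 (by simpa using hle h))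
    have hlt : Submodule.span k {a | a ∈ L} < Submodule.span k {a | a ∈ L ++ [v]} :=
      (Submodule.span_mono fun a (ha : a ∈ L) ↦ by simp [ha]).lt_of_not_ge fun h ↦
        hvL (h (Submodule.subset_span (by simp)))
    have : FiniteDimensional k (Submodule.span k {a | a ∈ L ++ [v]}) :=
      FiniteDimensional.span_of_finite k (List.finite_toSet _)
    rw [List.length_append, List.length_singleton]
    exact (Nat.succ_le_succ (ih hL h1L)).trans (Submodule.finrank_lt_finrank_of_lt hlt)

end RegularSequences

section HomogeneousRegularSequences

attribute [local instance] MvPolynomial.gradedAlgebra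

open scoped Pointwise

variable {σ R : Type*} [CommRing R] {K : Ideal (MvPolynomial σ R)} {a b : MvPolynomial σ R}

lemma homogeneousComponent_mul_of_isHomogeneous {i : ℕ} (ha : a.IsHomogeneous i) (d : ℕ) :
    homogeneousComponent d (a * b) =
      if i ≤ d then a * homogeneousComponent (d - i) b else 0 := by
  have hdec (p : MvPolynomial σ R) (e : ℕ) : (DirectSum.decompose
      (homogeneousSubmodule σ R) p e : MvPolynomial σ R) = homogeneousComponent e p :=
    decomposition.decompose'_apply p e
  rw [← hdec, ← hdec]
  split_ifs with h
  · exact DirectSum.coe_decompose_mul_of_left_mem_of_le (homogeneousSubmodule σ R) ha h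
  · exact DirectSum.coe_decompose_mul_of_left_mem_of_not_le (homogeneousSubmodule σ R) ha h

lemma isHomogeneous_ofList {L : List (MvPolynomial σ R)} (hL : ∀ a ∈ L, ∃ i, a.IsHomogeneous i) :
    (Ideal.ofList L).IsHomogeneous (homogeneousSubmodule σ R) :=
  Ideal.homogeneous_span _ _ hL

lemma mem_of_forall_mem_sup_span_pow (hK : K.IsHomogeneous (homogeneousSubmodule σ R)) {i : ℕ}
    (ha : a.IsHomogeneous (i + 1)) {u : MvPolynomial σ R}
    (hu : ∀ m, u ∈ K ⊔ Ideal.span {a ^ m}) : u ∈ K := by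
  refine (mem_iff_homogeneousComponent_mem hK u).mpr fun d ↦ ?_
  obtain ⟨w, hw⟩ := mem_sup_span_singleton_iff.mp (hu (d + 1))
  have hlt : ¬ (i + 1) * (d + 1) ≤ d := by nlinarith
  simpa only [map_sub, homogeneousComponent_mul_of_isHomogeneous (ha.pow (d + 1)), if_neg hlt,
    sub_zero] using homogeneousComponent_mem_of_mem hK hw d

lemma eq_bot_of_eq_smul_of_isHomogeneous (hK : K.IsHomogeneous (homogeneousSubmodule σ R)) {i : ℕ}
    (ha : a.IsHomogeneous (i + 1)) {N : Submodule (MvPolynomial σ R) (MvPolynomial σ R ⧸ K)}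
    (hN : N = a • N) : N = ⊥ := by
  have hpow (m : ℕ) : N = a ^ m • N := by
    induction m with
    | zero => simp
    | succ m ih => rw [pow_succ, mul_smul, ← hN, ← ih]
  refine (Submodule.eq_bot_iff N).mpr fun x hx ↦ ?_
  obtain ⟨u, rfl⟩ := Ideal.Quotient.mk_surjective x
  refine Ideal.Quotient.eq_zero_iff_mem.mpr (mem_of_forall_mem_sup_span_pow hK ha fun m ↦ ?_)
  obtain ⟨y, -, hy⟩ := Submodule.mem_smul_pointwise_iff_exists _ _ _ |>.mp (hpow m ▸ hx)
  obtain ⟨w, rfl⟩ := Ideal.Quotient.mk_surjective y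
  exact mem_sup_span_singleton_iff.mpr ⟨w, (Ideal.Quotient.mk_eq_mk_iff_sub_mem _ _).mp hy.symm⟩

lemma isWeaklyRegular_of_perm_of_isHomogeneous {L L' : List (MvPolynomial σ R)}
    (hL : IsWeaklyRegular (MvPolynomial σ R) L) (hperm : L.Perm L')
    (hhom : ∀ a ∈ L, ∃ i, a.IsHomogeneous (i + 1)) : IsWeaklyRegular (MvPolynomial σ R) L' := by
  refine hL.prototype_perm hperm fun a b T hT ↦ eq_bot_of_eq_smul_of_isHomogeneous ?_
    (hhom a (hT.subset List.mem_cons_self)).choose_spec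
  rw [smul_eq_mul, Ideal.mul_top]
  refine isHomogeneous_ofList fun c hc ↦ ?_
  obtain ⟨i, hi⟩ := hhom c (hT.subset (by simp [hc]))
  exact ⟨i + 1, hi⟩

/-- The socle of `R[X]/I` is concentrated in degrees at least `s`: a form of degree less than `s`
that is annihilated modulo `I` by every variable lies in `I`. -/
def SocleVanishesBelow (I : Ideal (MvPolynomial σ R)) (s : ℕ) : Prop :=
  ∀ d < s, ∀ f : MvPolynomial σ R, f.IsHomogeneous d → (∀ i, X i * f ∈ I) → f ∈ I

lemma SocleVanishesBelow.mem_of_forall_mul_mem {I : Ideal (MvPolynomial σ R)} {s : ℕ}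
    (hI : SocleVanishesBelow I s) {d e : ℕ} (hde : d + e ≤ s) {f : MvPolynomial σ R}
    (hf : f.IsHomogeneous d) (h : ∀ g : MvPolynomial σ R, g.IsHomogeneous e → g * f ∈ I) :
    f ∈ I := by
  induction e with
  | zero => simpa using h 1 (isHomogeneous_one σ R)
  | succ e ih =>
    refine ih (by lia) fun g hg ↦
      hI (e + d) (by lia) _ (hg.mul hf) fun i ↦ ?_
    rw [← mul_assoc]
    exact h _ (by simpa [add_comm] using (isHomogeneous_X R i).mul hg)

/- If `b f = a g` modulo `K`, then `f ↦ g` identifies the socle of `R[X]/(K, a)` with the socle of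
`R[X]/(K, b)`, shifting degrees by `j - i`. -/
lemma SocleVanishesBelow.exchange (hK : K.IsHomogeneous (homogeneousSubmodule σ R)) {i j s t : ℕ}
    (hai : a.IsHomogeneous i) (hbj : b.IsHomogeneous j)
    (ha : IsSMulRegular (MvPolynomial σ R ⧸ K) a) (hb : IsSMulRegular (MvPolynomial σ R ⧸ K) b)
    (hbX : b ∈ Ideal.span (Set.range X))
    (hs : SocleVanishesBelow (K ⊔ Ideal.span {b}) s) (hst : t + j ≤ s + i) :
    SocleVanishesBelow (K ⊔ Ideal.span {a}) t := by
  rw [isSMulRegular_quotient_iff_mem_of_smul_mem] at ha hb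
  simp only [smul_eq_mul] at ha hb
  intro d hd f hf hXf
  have hbf : b * f ∈ K ⊔ Ideal.span {a} := by
    have hle : Ideal.span (Set.range X) ≤ (K ⊔ Ideal.span {a}).colon {f} :=
      Ideal.span_le.mpr <| Set.range_subset_iff.mpr fun l ↦ by
        simpa [Submodule.mem_colon_singleton] using hXf l
    exact Submodule.mem_colon_singleton.mp (hle hbX)
  obtain ⟨g₀, hg₀⟩ := mem_sup_span_singleton_iff.mp hbf
  have hcomp := homogeneousComponent_mem_of_mem hK hg₀ (j + d)
  rw [map_sub, homogeneousComponent_mul_of_isHomogeneous hai,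
    homogeneousComponent_of_mem ((mem_homogeneousSubmodule _ _).mpr (hbj.mul hf)),
    if_pos rfl] at hcomp
  split_ifs at hcomp with hle
  · set g := homogeneousComponent (j + d - i) g₀
    have hXg (l : σ) : X l * g ∈ K ⊔ Ideal.span {b} := by
      obtain ⟨w, hw⟩ := mem_sup_span_singleton_iff.mp (hXf l)
      refine mem_sup_span_singleton_iff.mpr ⟨w, ha _ ?_⟩
      convert K.sub_mem (K.mul_mem_left b hw) (K.mul_mem_left (X l) hcomp) using 1
      ring
    obtain ⟨w, hw⟩ := mem_sup_span_singleton_iff.mp <|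
      hs (j + d - i) (by lia) g (homogeneousComponent_isHomogeneous _ _) hXg
    refine mem_sup_span_singleton_iff.mpr ⟨w, hb _ ?_⟩
    convert K.add_mem hcomp (K.mul_mem_left a hw) using 1
    ring
  · exact Ideal.mem_sup_left (hb _ (by simpa using hcomp))

lemma isWeaklyRegular_map_X {l : List σ} (hl : l.Nodup) :
    IsWeaklyRegular (MvPolynomial σ R) (l.map (X : σ → MvPolynomial σ R)) := by
  induction l using List.reverseRecOn with
  | nil => exact .nil _ _
  | append_singleton l i ih =>
    obtain ⟨hl, hi⟩ : l.Nodup ∧ i ∉ l := by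
      simpa [List.nodup_append, imp_not_comm] using hl
    have hofList : Ideal.ofList (l.map X) =
        Ideal.span ((X : σ → MvPolynomial σ R) '' {j | j ∈ l}) := by
      simp [Ideal.ofList, Set.image]
    rw [List.map_append, List.map_singleton, isWeaklyRegular_concat_iff, hofList,
      isSMulRegular_quotient_iff_mem_of_smul_mem]
    refine ⟨ih hl, fun f hf ↦ mem_ideal_span_X_image.mpr fun m hm ↦ ?_⟩
    have hsupp : Finsupp.single i 1 + m ∈ (X i * f : MvPolynomial σ R).support := by
      simpa [coeff_X_mul] using hm
    obtain ⟨j, hjl, hj⟩ := mem_ideal_span_X_image.mp hf _ hsupp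
    have hij : i ≠ j := fun h ↦ hi (h ▸ hjl)
    exact ⟨j, hjl, by simpa [Finsupp.single_eq_of_ne' hij] using hj⟩

variable {k : Type*} [Field k] [Infinite k] {m : ℕ} {V : Submodule k (MvPolynomial σ k)}

lemma exists_isWeaklyRegular_concat_of_concat_X [Finite σ]
    (hV : V ≤ homogeneousSubmodule σ k (m + 1)) {i : σ}
    (hi : X i ∈ (Ideal.span (V : Set (MvPolynomial σ k))).radical) {L : List (MvPolynomial σ k)}
    (hhom : ∀ a ∈ L, ∃ d, a.IsHomogeneous d) {s : ℕ}
    (hL : IsWeaklyRegular (MvPolynomial σ k) (L ++ [X i]))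
    (hs : SocleVanishesBelow (Ideal.ofList (L ++ [X i])) s) :
    ∃ v ∈ V, IsWeaklyRegular (MvPolynomial σ k) (L ++ [v]) ∧
      SocleVanishesBelow (Ideal.ofList (L ++ [v])) (s + m) := by
  obtain ⟨hL, hXL⟩ := (isWeaklyRegular_concat_iff _ _).mp hL
  obtain ⟨v, hvV, hvL⟩ := exists_isSMulRegular_of_mem_radical_span V hi hXL
  refine ⟨v, hvV, (isWeaklyRegular_concat_iff _ _).mpr ⟨hL, hvL⟩, ?_⟩
  rw [Ideal.ofList_append, Ideal.ofList_singleton] at hs ⊢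
  exact hs.exchange (isHomogeneous_ofList hhom) (hV hvV) (isHomogeneous_X k i) hvL hXL
    (Ideal.subset_span ⟨i, rfl⟩) (by lia)

lemma exists_isWeaklyRegular_of_append_map_X [Finite σ]
    (hV : V ≤ homogeneousSubmodule σ k (m + 1))
    (hX : ∀ i, X i ∈ (Ideal.span (V : Set (MvPolynomial σ k))).radical) {l : List σ}
    {L : List (MvPolynomial σ k)} (hLV : ∀ a ∈ L, a ∈ V) {s : ℕ}
    (hL : IsWeaklyRegular (MvPolynomial σ k) (L ++ l.map X))
    (hs : SocleVanishesBelow (Ideal.ofList (L ++ l.map X)) s) :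
    ∃ L' : List (MvPolynomial σ k), (∀ a ∈ L', a ∈ V) ∧ L'.length = L.length + l.length ∧
      IsWeaklyRegular (MvPolynomial σ k) L' ∧
      SocleVanishesBelow (Ideal.ofList L') (s + l.length * m) := by
  induction l generalizing L s with
  | nil => exact ⟨L, hLV, rfl, by simpa using hL, by simpa using hs⟩
  | cons i l ih =>
    have hhom : ∀ a ∈ L ++ (i :: l).map X, ∃ d, a.IsHomogeneous (d + 1) := by
      intro a ha
      rcases List.mem_append.mp ha with ha | ha
      · exact ⟨m, hV (hLV a ha)⟩
      · obtain ⟨j, -, rfl⟩ := List.mem_map.mp ha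
        exact ⟨0, isHomogeneous_X k j⟩
    have hperm : (L ++ (i :: l).map X).Perm (L ++ l.map X ++ [X i]) :=
      List.perm_middle.trans (List.perm_append_singleton _ _).symm
    have hhomT : ∀ a ∈ L ++ l.map X, ∃ d, a.IsHomogeneous (d + 1) := fun a ha ↦
      hhom a (hperm.mem_iff.mpr (List.mem_append_left _ ha))
    obtain ⟨v, hvV, hv, hvs⟩ := exists_isWeaklyRegular_concat_of_concat_X hV (hX i)
      (fun a ha ↦ (hhomT a ha).imp' (· + 1) fun _ ↦ id)
      (isWeaklyRegular_of_perm_of_isHomogeneous hL hperm hhom) (ofList_eq_of_perm hperm ▸ hs)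
    have hperm' : (L ++ l.map X ++ [v]).Perm (v :: L ++ l.map X) := List.perm_append_singleton _ _
    obtain ⟨L', hL'V, hlen, hL', hs'⟩ := ih (L := v :: L) (by simpa [hvV] using hLV)
      (isWeaklyRegular_of_perm_of_isHomogeneous hv hperm' fun a ha ↦ by
        rcases List.mem_append.mp ha with ha | ha
        · exact hhomT a ha
        · exact ⟨m, hV (List.mem_singleton.mp ha ▸ hvV)⟩)
      (ofList_eq_of_perm hperm' ▸ hvs)
    refine ⟨L', hL'V, by simp [hlen]; ring, hL', ?_⟩
    rwa [List.length_cons, show s + (l.length + 1) * m = s + m + l.length * m by ring]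

theorem socleVanishesBelow_span_range [Fintype σ] {ι : Type*} [Fintype ι]
    (hcard : Fintype.card ι ≤ Fintype.card σ) {q : ι → MvPolynomial σ k}
    (hq : ∀ i, (q i).IsHomogeneous (m + 1))
    (hX : ∀ j, X j ∈ (Ideal.span (Set.range q)).radical) :
    SocleVanishesBelow (Ideal.span (Set.range q)) (Fintype.card σ * m) := by
  have hideal (s : Set (MvPolynomial σ k)) :
      Ideal.span (Submodule.span k s : Set (MvPolynomial σ k)) = Ideal.span s :=
    Submodule.span_span_of_tower k (MvPolynomial σ k) s
  have hV : Submodule.span k (Set.range q) ≤ homogeneousSubmodule σ k (m + 1) :=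
    Submodule.span_le.mpr (Set.range_subset_iff.mpr hq)
  obtain ⟨L, hLV, hlen, hL, hs⟩ := exists_isWeaklyRegular_of_append_map_X hV
    (fun j ↦ by rw [hideal]; exact hX j) (l := Finset.univ.toList) (L := []) (s := 0) (by simp)
    (isWeaklyRegular_map_X (Finset.nodup_toList _)) fun d hd ↦ absurd hd d.not_lt_zero
  have h1 : 1 ∉ Ideal.ofList L := fun h ↦ by
    have hle : Ideal.ofList L ≤ RingHom.ker (constantCoeff (R := k) (σ := σ)) :=
      Ideal.span_le.mpr fun a ha ↦ (hV (hLV a ha)).coeff_eq_zero (by simp)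
    simpa using RingHom.mem_ker.mp (hle h)
  have hspan : Submodule.span k {a | a ∈ L} = Submodule.span k (Set.range q) := by
    have : FiniteDimensional k (Submodule.span k (Set.range q)) :=
      FiniteDimensional.span_of_finite k (Set.finite_range q)
    refine Submodule.eq_of_le_of_finrank_le (Submodule.span_le.mpr hLV) ?_
    calc finrank k (Submodule.span k (Set.range q)) ≤ Fintype.card ι := finrank_range_le_card q
      _ ≤ Fintype.card σ := hcard
      _ = L.length := by simp [hlen]
      _ ≤ _ := length_le_finrank_span_of_isWeaklyRegular hL h1
  have hI : Ideal.ofList L = Ideal.span (Set.range q) := by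
    rw [← hideal (Set.range q), ← hspan, hideal]
  simpa [hI] using hs

end HomogeneousRegularSequences

lemma X_mem_radical_span_range {σ ι k : Type*} [Field k] [IsAlgClosed k] [Finite σ]
    {q : ι → MvPolynomial σ k} (hq : ∀ p : σ → k, (∀ i, eval p (q i) = 0) → p = 0) (j : σ) :
    X j ∈ (Ideal.span (Set.range q)).radical := by
  rw [← vanishingIdeal_zeroLocus_eq_radical (K := k), mem_vanishingIdeal_iff]
  intro p hp
  have hp0 : p = 0 := hq p fun i ↦ by
    simpa using mem_zeroLocus_iff.mp hp (q i) (Ideal.subset_span ⟨i, rfl⟩)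
  simp [hp0]

section BinaryForms

open scoped Pointwise

variable {σ R : Type*} [CommSemiring R]

lemma homogeneousSubmodule_eq_span_range_X_pow (n : ℕ) :
    homogeneousSubmodule σ R n =
      Submodule.span R (Set.range (X : σ → MvPolynomial σ R) ^ n) := by
  rw [← homogeneousSubmodule_one_pow, homogeneousSubmodule_one_eq_span_X, Submodule.span_pow]

variable {Λ : MvPolynomial σ R →ₗ[R] R} {x y : MvPolynomial σ R} {u v : σ → R}

lemma apply_X_mul_X_mul_of_binary (hΛ : ∀ i f, Λ (X i * f) = u i * Λ (x * f) + v i * Λ (y * f))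
    (i j : σ) (f : MvPolynomial σ R) :
    Λ (X i * (X j * f)) = u i * u j * Λ (x * (x * f)) +
      (u i * v j + v i * u j) * Λ (x * (y * f)) + v i * v j * Λ (y * (y * f)) := by
  rw [hΛ, mul_left_comm x, mul_left_comm y, hΛ, hΛ, mul_left_comm y x]
  ring

lemma apply_eq_zero_of_isHomogeneous_three
    (hΛ : ∀ i f, Λ (X i * f) = u i * Λ (x * f) + v i * Λ (y * f))
    (h₀ : Λ (x * (x * x)) = 0) (h₁ : Λ (x * (x * y)) = 0) (h₂ : Λ (x * (y * y)) = 0)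
    (h₃ : Λ (y * (y * y)) = 0) {g : MvPolynomial σ R} (hg : g.IsHomogeneous 3) : Λ g = 0 := by
  suffices homogeneousSubmodule σ R 3 ≤ LinearMap.ker Λ from this hg
  rw [homogeneousSubmodule_eq_span_range_X_pow, pow_succ', pow_two, Submodule.span_le]
  rintro _ ⟨_, ⟨i, rfl⟩, _, ⟨_, ⟨j, rfl⟩, _, ⟨l, rfl⟩, rfl⟩, rfl⟩
  have hxx : Λ (x * (x * X l)) = 0 := by
    rw [← mul_assoc, mul_comm, hΛ, h₀, mul_comm y, mul_assoc, h₁, mul_zero, mul_zero, add_zero]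
  have hxy : Λ (x * (y * X l)) = 0 := by
    rw [← mul_assoc, mul_comm, hΛ, h₁, mul_comm y, mul_assoc, h₂, mul_zero, mul_zero, add_zero]
  have hyy : Λ (y * (y * X l)) = 0 := by
    rw [← mul_assoc, mul_comm, hΛ, h₂, h₃, mul_zero, mul_zero, add_zero]
  simp [apply_X_mul_X_mul_of_binary hΛ, hxx, hxy, hyy]

end BinaryForms

section BinaryCubics

open scoped Pointwise

variable {k : Type*} [Field k] [IsAlgClosed k]

lemma exists_sq_of_mul_eq_sq {m₀ m₁ m₂ : k} (h : m₀ * m₂ = m₁ ^ 2) (hne : m₀ ≠ 0 ∨ m₂ ≠ 0) :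
    ∃ a b, (a ≠ 0 ∨ b ≠ 0) ∧ m₀ = a ^ 2 ∧ m₁ = a * b ∧ m₂ = b ^ 2 := by
  obtain ⟨a, rfl⟩ := IsAlgClosed.exists_pow_nat_eq m₀ two_pos
  obtain ⟨b, rfl⟩ := IsAlgClosed.exists_pow_nat_eq m₂ two_pos
  have hab : a ≠ 0 ∨ b ≠ 0 := hne.imp (fun h ↦ by simpa using h) (fun h ↦ by simpa using h)
  rcases sq_eq_sq_iff_eq_or_eq_neg.mp ((mul_pow a b 2).trans h) with h | h
  · exact ⟨a, b, hab, rfl, h.symm, rfl⟩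
  · exact ⟨a, -b, by simpa using hab, rfl, by rw [mul_neg, h, neg_neg], by ring⟩

/- In divided powers, the derivative along `(s, t)` of the binary cubic with coefficients `cᵢ` is
the quadric with the three coefficients below. It is a square when its discriminant, a quadratic
form in `(s, t)`, vanishes. -/
lemma exists_binaryCubic_derivative_eq_sq {c₀ c₁ c₂ c₃ : k}
    (hc : ¬(c₀ = 0 ∧ c₁ = 0 ∧ c₂ = 0 ∧ c₃ = 0)) :
    ∃ s t a b, (a ≠ 0 ∨ b ≠ 0) ∧
      s * c₀ + t * c₁ = a ^ 2 ∧ s * c₁ + t * c₂ = a * b ∧ s * c₂ + t * c₃ = b ^ 2 := by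
  suffices ∃ s t, (s * c₀ + t * c₁) * (s * c₂ + t * c₃) = (s * c₁ + t * c₂) ^ 2 ∧
      (s * c₀ + t * c₁ ≠ 0 ∨ s * c₂ + t * c₃ ≠ 0) by
    obtain ⟨s, t, h, hne⟩ := this
    exact ⟨s, t, exists_sq_of_mul_eq_sq h hne⟩
  by_cases hD : c₀ * c₂ = c₁ ^ 2
  · by_cases h : c₀ = 0 ∧ c₂ = 0
    · obtain ⟨rfl, rfl⟩ := h
      have : c₁ = 0 := by simpa using hD.symm
      exact ⟨0, 1, by simp_all⟩
    · exact ⟨1, 0, by simpa using hD, by simpa [← not_and_or] using h⟩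
  · obtain ⟨s, hs⟩ := IsAlgClosed.exists_root
      (.C (c₀ * c₂ - c₁ ^ 2) * .X ^ 2 + .C (c₀ * c₃ - c₁ * c₂) * .X + .C (c₁ * c₃ - c₂ ^ 2)) <| by
        rw [Polynomial.degree_quadratic (sub_ne_zero.mpr hD)]
        decide
    have hs : (s * c₀ + c₁) * (s * c₂ + c₃) = (s * c₁ + c₂) ^ 2 := by
      simp only [Polynomial.IsRoot.def, Polynomial.eval_add, Polynomial.eval_mul,
        Polynomial.eval_pow, Polynomial.eval_C, Polynomial.eval_X] at hs
      linear_combination hs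
    refine ⟨s, 1, by simpa using hs, ?_⟩
    by_contra! h
    simp only [one_mul] at h
    have h₁ : s * c₁ + c₂ = 0 := by simpa [h.1] using hs.symm
    exact hD (by linear_combination c₀ * h₁ - c₁ * h.1)

variable {σ : Type*} {Λ : MvPolynomial σ k →ₗ[k] k} {x y : MvPolynomial σ k} {u v : σ → k}

lemma exists_mul_eq_eval_of_binary (hx : x.IsHomogeneous 1) (hy : y.IsHomogeneous 1)
    (hΛ : ∀ i f, Λ (X i * f) = u i * Λ (x * f) + v i * Λ (y * f))
    {g : MvPolynomial σ k} (hg : g.IsHomogeneous 3) (hΛg : Λ g ≠ 0) :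
    ∃ D : MvPolynomial σ k, ∃ p : σ → k, p ≠ 0 ∧
      ∀ q : MvPolynomial σ k, q.IsHomogeneous 2 → Λ (q * D) = eval p q := by
  obtain ⟨s, t, a, b, hab, h₀, h₁, h₂⟩ := exists_binaryCubic_derivative_eq_sq
    (c₀ := Λ (x * (x * x))) (c₁ := Λ (x * (x * y))) (c₂ := Λ (x * (y * y))) (c₃ := Λ (y * (y * y)))
    fun h ↦ hΛg (apply_eq_zero_of_isHomogeneous_three hΛ h.1 h.2.1 h.2.2.1 h.2.2.2 hg)
  let D : MvPolynomial σ k := s • x + t • y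
  let p : σ → k := fun i ↦ u i * a + v i * b
  have hxx : Λ (x * (x * D)) = a ^ 2 := by simpa [D, mul_add] using h₀
  have hxy : Λ (x * (y * D)) = a * b := by simpa [D, mul_add, mul_comm y x] using h₁
  have hyy : Λ (y * (y * D)) = b ^ 2 := by
    simpa [D, mul_add, mul_comm y x, mul_left_comm y x] using h₂
  have heval (q : MvPolynomial σ k) (hq : q.IsHomogeneous 2) : Λ (q * D) = eval p q := by
    suffices homogeneousSubmodule σ k 2 ≤
        LinearMap.eqLocus (Λ ∘ₗ LinearMap.mulRight k D) (aeval p).toLinearMap by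
      simpa using this hq
    rw [homogeneousSubmodule_eq_span_range_X_pow, pow_two, Submodule.span_le]
    rintro _ ⟨_, ⟨i, rfl⟩, _, ⟨j, rfl⟩, rfl⟩
    simp [mul_assoc, apply_X_mul_X_mul_of_binary hΛ, hxx, hxy, hyy, p]
    ring
  refine ⟨D, p, fun hp ↦ ?_, heval⟩
  have hzero {z : MvPolynomial σ k} (hz : z.IsHomogeneous 1) : eval p (z * z) = 0 := by
    simpa [hp, constantCoeff_eq] using (hz.mul hz).coeff_eq_zero (d := 0) (by simp)
  have ha : a ^ 2 = 0 := by rw [← hxx, ← mul_assoc, heval _ (hx.mul hx), hzero hx]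
  have hb : b ^ 2 = 0 := by rw [← hyy, ← mul_assoc, heval _ (hy.mul hy), hzero hy]
  simp_all

end BinaryCubics

lemma exists_le_sup_span_range {k V : Type*} [Field k] [AddCommGroup V] [Module k V]
    {Z E : Submodule k V} [FiniteDimensional k E] (hZE : Z ≤ E) {n : ℕ}
    (h : finrank k E ≤ finrank k Z + n) :
    ∃ v : Fin n → V, (∀ i, v i ∈ E) ∧ E ≤ Z ⊔ Submodule.span k (Set.range v) := by
  induction n generalizing Z with
  | zero =>
    exact ⟨Fin.elim0, fun i ↦ i.elim0,
      (Submodule.eq_of_le_of_finrank_le hZE h).ge.trans le_sup_left⟩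
  | succ n ih =>
    by_cases hEZ : E ≤ Z
    · exact ⟨0, fun _ ↦ E.zero_mem, hEZ.trans le_sup_left⟩
    obtain ⟨w, hwE, hwZ⟩ := SetLike.not_le_iff_exists.mp hEZ
    have hle : Z ⊔ Submodule.span k {w} ≤ E :=
      sup_le hZE ((Submodule.span_singleton_le_iff_mem w E).mpr hwE)
    have hlt : finrank k Z < finrank k (Z ⊔ Submodule.span k {w} : Submodule k V) := by
      have := Submodule.finiteDimensional_of_le hle
      refine Submodule.finrank_lt_finrank_of_lt (lt_of_le_not_ge le_sup_left fun hge ↦ ?_)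
      exact hwZ (hge (Submodule.mem_sup_right (Submodule.mem_span_singleton_self w)))
    obtain ⟨v, hvE, hv⟩ := ih hle (by lia)
    refine ⟨Fin.cons w v, Fin.cases hwE hvE, hv.trans_eq ?_⟩
    rw [Fin.range_cons, Submodule.span_insert, sup_assoc]

section Apolarity

variable {n : ℕ}

lemma coeff_linform_pow_mul_prod_factorial (p : Fin n → ℂ) (α : Fin n →₀ ℕ) :
    coeff α (linform p ^ α.degree) * ∏ i, ((α i).factorial : ℂ) =
      α.degree.factorial * ∏ i, p i ^ α i := by
  have hlin : linform p = ∑ i, p i • X i := by simp [linform, smul_eq_C_mul]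
  have hmult : (∏ i, ((α i).factorial : ℂ)) * α.multinomial = α.degree.factorial := by
    rw [Finsupp.multinomial_eq_of_support_subset (Finset.subset_univ _), Finsupp.degree_eq_sum]
    exact_mod_cast Nat.multinomial_spec Finset.univ α
  rw [hlin, coeff_linearCombination_X_pow_of_fintype,
    if_pos (show (α.sum fun _ m ↦ m) = α.degree from rfl),
    Finsupp.prod_fintype _ _ fun i ↦ pow_zero _, ← hmult]
  ring

lemma apolar_linform_pow {d : ℕ} {f : MvPolynomial (Fin n) ℂ} (hf : f.IsHomogeneous d)
    (p : Fin n → ℂ) : apolar f (linform p ^ d) = d.factorial * eval p f := by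
  rw [apolar, eval_eq', Finset.mul_sum]
  refine Finset.sum_congr rfl fun α hα ↦ ?_
  have hα : α.degree = d := by
    rw [Finsupp.degree_eq_weight_one]
    exact hf (mem_support_iff.mp hα)
  rw [mul_assoc, ← hα, coeff_linform_pow_mul_prod_factorial, mul_left_comm]

end Apolarity

section LinearAnnihilator

lemma exists_eval_eq_zero_of_mul_mem {σ ι k : Type*} [Field k] [IsAlgClosed k]
    {q : ι → MvPolynomial σ k} (hq : ∀ i, (q i).IsHomogeneous 2) {s d : ℕ}
    (hs : SocleVanishesBelow (Ideal.span (Set.range q)) s) (hd : d + 3 ≤ s)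
    {f x y : MvPolynomial σ k} (hf : f.IsHomogeneous d) (hfI : f ∉ Ideal.span (Set.range q))
    (hx : x.IsHomogeneous 1) (hy : y.IsHomogeneous 1)
    (hxy : ∀ j, ∃ a b : k, (X j - (a • x + b • y)) * f ∈ Ideal.span (Set.range q)) :
    ∃ p : σ → k, p ≠ 0 ∧ ∀ i, eval p (q i) = 0 := by
  obtain ⟨g, hg, hgf⟩ : ∃ g : MvPolynomial σ k, g.IsHomogeneous 3 ∧
      g * f ∉ Ideal.span (Set.range q) := by
    by_contra! h
    exact hfI (hs.mem_of_forall_mul_mem hd hf h)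
  obtain ⟨φ, hφg, hφI⟩ := Submodule.exists_le_ker_of_notMem
    (p := (Ideal.span (Set.range q)).restrictScalars k) hgf
  choose u v huv using hxy
  have hφf (j : σ) (r : MvPolynomial σ k) :
      φ (X j * r * f) = u j * φ (x * r * f) + v j * φ (y * r * f) := by
    have h : φ (r * ((X j - (u j • x + v j • y)) * f)) = 0 := hφI (Ideal.mul_mem_left _ r (huv j))
    rw [show r * ((X j - (u j • x + v j • y)) * f) =
      X j * r * f - (u j • (x * r * f) + v j • (y * r * f)) by
        simp only [smul_eq_C_mul]; ring] at h
    simpa [sub_eq_zero] using h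
  obtain ⟨D, p, hp, hD⟩ :=
    exists_mul_eq_eval_of_binary (Λ := φ ∘ₗ LinearMap.mulRight k f) hx hy hφf hg hφg
  refine ⟨p, hp, fun i ↦ ?_⟩
  rw [← hD (q i) (hq i)]
  exact hφI (Ideal.mul_mem_right _ _ (Ideal.mul_mem_right _ _ (Ideal.subset_span ⟨i, rfl⟩)))

variable {n : ℕ} {I : Ideal (MvPolynomial (Fin n) ℂ)}

lemma gradedPiece_one_eq_span_range :
    gradedPiece I 1 = Submodule.span ℂ (Set.range fun j ↦ Ideal.Quotient.mk I (X j)) := by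
  rw [gradedPiece, homogeneousSubmodule_one_eq_span_X, Submodule.map_span, ← Set.range_comp]
  rfl

lemma exists_mul_mem_of_le_finrank_annihilator {f : MvPolynomial (Fin n) ℂ}
    (h : n ≤ finrank ℂ (gradedPiece I 1 ⊓
      LinearMap.ker (LinearMap.mulLeft ℂ (Ideal.Quotient.mk I f)) : Submodule ℂ _) + 2) :
    ∃ x y : MvPolynomial (Fin n) ℂ, x.IsHomogeneous 1 ∧ y.IsHomogeneous 1 ∧
      ∀ j, ∃ a b : ℂ, (X j - (a • x + b • y)) * f ∈ I := by
  have hfin : FiniteDimensional ℂ (gradedPiece I 1) :=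
    gradedPiece_one_eq_span_range (I := I) ▸ FiniteDimensional.span_of_finite ℂ (Set.finite_range _)
  have hn : finrank ℂ (gradedPiece I 1) ≤ n := by
    rw [gradedPiece_one_eq_span_range]
    exact (finrank_range_le_card _).trans_eq (Fintype.card_fin n)
  obtain ⟨w, hwE, hw⟩ := exists_le_sup_span_range inf_le_left (hn.trans h)
  obtain ⟨x, hx, hxw⟩ := hwE 0
  obtain ⟨y, hy, hyw⟩ := hwE 1
  refine ⟨x, y, hx, hy, fun j ↦ ?_⟩
  obtain ⟨z, hz, t, ht, hzt⟩ := Submodule.mem_sup.mp <| hw <|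
    gradedPiece_one_eq_span_range (I := I) ▸ Submodule.subset_span (Set.mem_range_self j)
  obtain ⟨c, rfl⟩ := (Submodule.mem_span_range_iff_exists_fun ℂ).mp ht
  refine ⟨c 0, c 1, Ideal.Quotient.eq_zero_iff_mem.mp ?_⟩
  have hxw : Ideal.Quotient.mk I x = w 0 := hxw
  have hyw : Ideal.Quotient.mk I y = w 1 := hyw
  have hsmul (a : ℂ) (r : MvPolynomial (Fin n) ℂ) :
      Ideal.Quotient.mk I (a • r) = a • Ideal.Quotient.mk I r := rfl
  have hzf : Ideal.Quotient.mk I f * z = 0 := hz.2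
  rw [map_mul, map_sub, map_add, hsmul, hsmul, hxw, hyw, ← Fin.sum_univ_two fun i ↦ c i • w i,
    ← hzt, add_sub_cancel_right, mul_comm, hzf]

lemma exists_eval_eq_zero_of_le_finrank_annihilator {d : ℕ} (hd : d + 3 ≤ n)
    {q : Fin n → MvPolynomial (Fin n) ℂ} (hq : ∀ i, (q i).IsHomogeneous 2)
    (hX : ∀ j, X j ∈ (Ideal.span (Set.range q)).radical)
    {Q : MvPolynomial (Fin n) ℂ ⧸ Ideal.span (Set.range q)}
    (hQ : Q ∈ gradedPiece (Ideal.span (Set.range q)) d) (hQ0 : Q ≠ 0)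
    (h : n ≤ finrank ℂ (gradedPiece (Ideal.span (Set.range q)) 1 ⊓
      LinearMap.ker (LinearMap.mulLeft ℂ Q) : Submodule ℂ _) + 2) :
    ∃ p : Fin n → ℂ, p ≠ 0 ∧ ∀ i, eval p (q i) = 0 := by
  have hs : SocleVanishesBelow (Ideal.span (Set.range q)) n := by
    simpa using socleVanishesBelow_span_range le_rfl hq hX
  obtain ⟨f, hf, rfl⟩ := hQ
  obtain ⟨x, y, hx, hy, hxy⟩ := exists_mul_mem_of_le_finrank_annihilator h
  exact exists_eval_eq_zero_of_mul_mem hq hs hd hf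
    (fun hfI ↦ hQ0 (Ideal.Quotient.eq_zero_iff_mem.mpr hfI)) hx hy hxy

end LinearAnnihilator

theorem stmt16_general {n d : ℕ} (hd : d + 3 ≤ n) (q : Fin n → MvPolynomial (Fin n) ℂ)
    (hhom : ∀ i, (q i).IsHomogeneous 2)
    (hci : ∀ p : Fin n → ℂ, (∀ i, MvPolynomial.eval p (q i) = 0) → p = 0) :
    (∀ Q ∈ gradedPiece (Ideal.span (Set.range q)) d, Q ≠ 0 →
        n ≤ finrank ℂ
          ((gradedPiece (Ideal.span (Set.range q)) 1 ⊓ LinearMap.ker (LinearMap.mulLeft ℂ Q) :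
            Submodule ℂ (MvPolynomial (Fin n) ℂ ⧸ Ideal.span (Set.range q)))) + 2 →
        ∃ p : Fin n → ℂ, p ≠ 0 ∧ ∀ i, apolar (q i) (linform p ^ 2) = 0) ∧
      ∀ Q ∈ gradedPiece (Ideal.span (Set.range q)) d, Q ≠ 0 →
        finrank ℂ
          ((gradedPiece (Ideal.span (Set.range q)) 1 ⊓ LinearMap.ker (LinearMap.mulLeft ℂ Q) :
            Submodule ℂ (MvPolynomial (Fin n) ℂ ⧸ Ideal.span (Set.range q)))) + 3 ≤ n := by
  have hX := X_mem_radical_span_range hci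
  refine ⟨fun Q hQ hQ0 h ↦ ?_, fun Q hQ hQ0 ↦ ?_⟩
  · obtain ⟨p, hp, hpq⟩ := exists_eval_eq_zero_of_le_finrank_annihilator hd hhom hX hQ hQ0 h
    exact ⟨p, hp, fun i ↦ by rw [apolar_linform_pow (hhom i), hpq, mul_zero]⟩
  · by_contra! h
    obtain ⟨p, hp, hpq⟩ :=
      exists_eval_eq_zero_of_le_finrank_annihilator hd hhom hX hQ hQ0 (by lia)
    exact hp (hci p hpq)

/-- for an artinian complete intersection `A = ℂ[x₀,…,x₄]/I` of 5 quadrics and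
a nonzero `Q ∈ A_2`, if `Z(Q) = {z ∈ A_1 : zQ = 0}` had dimension at least 3 there would
exist a nonzero linear form `p ∈ U` with `p² ∈ I⁻¹_2` (i.e. `p²` apolar to all generators);
consequently `dim Z(Q) ≤ 2` for every nonzero `Q ∈ A_2`. -/
theorem stmt16 (q : Fin 5 → MvPolynomial (Fin 5) ℂ)
    (hhom : ∀ i, (q i).IsHomogeneous 2)
    (hci : ∀ p : Fin 5 → ℂ, (∀ i, MvPolynomial.eval p (q i) = 0) → p = 0) :
    (∀ Q ∈ gradedPiece (Ideal.span (Set.range q)) 2, Q ≠ 0 →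
        3 ≤ Module.finrank ℂ
          ((gradedPiece (Ideal.span (Set.range q)) 1 ⊓ LinearMap.ker (LinearMap.mulLeft ℂ Q) :
            Submodule ℂ (MvPolynomial (Fin 5) ℂ ⧸ Ideal.span (Set.range q)))) →
        ∃ p : Fin 5 → ℂ, p ≠ 0 ∧ ∀ i, apolar (q i) (linform p ^ 2) = 0) ∧
      ∀ Q ∈ gradedPiece (Ideal.span (Set.range q)) 2, Q ≠ 0 →
        Module.finrank ℂ
          ((gradedPiece (Ideal.span (Set.range q)) 1 ⊓ LinearMap.ker (LinearMap.mulLeft ℂ Q) :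
            Submodule ℂ (MvPolynomial (Fin 5) ℂ ⧸ Ideal.span (Set.range q)))) ≤ 2 := by
  have h := stmt16_general (d := 2) le_rfl q hhom hci
  exact ⟨fun Q hQ hQ0 h3 ↦ h.1 Q hQ hQ0 (by lia), fun Q hQ hQ0 ↦ by have := h.2 Q hQ hQ0; lia⟩
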